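/- arXiv:math/0505180 — 2 statements merged into one kernel-verified Lean document; each statement's English description precedes it below -/
import Mathlib

section
/- Let u, v ∈ ℝ³ be unit spacelike vectors and x, y ∈ H² with B(u,x) > 0, B(u,y) < 0, B(v,x) > 0, B(v,y) < 0. Suppose the dual geodesics of u and v are disjoint, i.e., there is no z ∈ H² with B(u,z) = 0 and B(v,z) = 0. Then B(u,v) ≥ 1. -/
/-- The Minkowski bilinear form on ℝ³. -/
noncomputable def B (x y : Fin 3 → ℝ) : ℝ := -(x 0 * y 0) + x 1 * y 1 + x 2 * y 2

/-- The hyperboloid model of the hyperbolic plane. -/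
def H2 : Set (Fin 3 → ℝ) := {x | B x x = -1 ∧ 0 < x 0}

/-!
If `|⟪u, v⟫| < 1`, the form is positive definite on the span of `u` and `v`, so projecting a
timelike vector off that span keeps it timelike; rescaled, it lies on both dual hyperplanes. Hence
disjointness gives `1 ≤ |⟪u, v⟫|`. The sum `u + v` is positive at `x` and negative at `y`, which
no causal vector is, so `0 < ⟪u + v, u + v⟫ = 2 + 2 ⟪u, v⟫`, and the sign of `⟪u, v⟫` is settled.
-/

open scoped RealInnerProductSpace
open LinearMap (BilinForm)

section Rejection

variable {K V : Type*} [Field K] [AddCommGroup V] [Module K V] {Q : BilinForm K V} {u v w : V}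

/-- The component of `x` orthogonal to `w` with respect to `Q`, i.e. `x` minus its projection to
the line spanned by `w`. It is orthogonal to `w` only if `Q w w ≠ 0`; otherwise it is `x`. -/
def rejection (Q : BilinForm K V) (w x : V) : V := x - (Q w x / Q w w) • w

lemma apply_rejection_eq_zero (hw : Q w w ≠ 0) (x : V) : Q w (rejection Q w x) = 0 := by
  simp [rejection, hw]

lemma apply_rejection_of_apply_eq_zero (huw : Q u w = 0) (x : V) :
    Q u (rejection Q w x) = Q u x := by
  simp [rejection, huw]

lemma rejection_apply_of_apply_eq_zero (huw : Q u w = 0) (x : V) :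
    Q (rejection Q u x) w = Q x w := by
  simp [rejection, huw]

lemma rejection_apply_self (hQ : Q.IsSymm) (hw : Q w w ≠ 0) (x : V) :
    Q (rejection Q w x) (rejection Q w x) = Q x x - Q w x ^ 2 / Q w w := by
  rw [rejection_apply_of_apply_eq_zero (apply_rejection_eq_zero hw x)]
  simp only [rejection, map_sub, map_smul, smul_eq_mul, hQ.eq x w]
  ring

variable [LinearOrder K] [IsStrictOrderedRing K]

lemma rejection_apply_self_le (hQ : Q.IsSymm) (hw : 0 < Q w w) (x : V) :
    Q (rejection Q w x) (rejection Q w x) ≤ Q x x := by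
  rw [rejection_apply_self hQ hw.ne']
  exact sub_le_self _ (by positivity)

lemma exists_orthogonal_to_pair_apply_self_le (hQ : Q.IsSymm) (hu : 0 < Q u u)
    (huv : Q u v ^ 2 < Q u u * Q v v) (x : V) :
    ∃ z, Q u z = 0 ∧ Q v z = 0 ∧ Q z z ≤ Q x x := by
  let v' := rejection Q u v
  let x' := rejection Q u x
  have hv' : 0 < Q v' v' := by
    rw [rejection_apply_self hQ hu.ne', sub_pos, div_lt_iff₀' hu]
    exact huv
  have huz : Q u (rejection Q v' x') = 0 := by
    rw [apply_rejection_of_apply_eq_zero (apply_rejection_eq_zero hu.ne' v),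
      apply_rejection_eq_zero hu.ne']
  refine ⟨rejection Q v' x', huz, ?_, ?_⟩
  · rw [← rejection_apply_of_apply_eq_zero huz v, apply_rejection_eq_zero hv'.ne']
  · exact (rejection_apply_self_le hQ hv' x').trans (rejection_apply_self_le hQ hu x)

end Rejection

section Minkowski

variable {E : Type*} [NormedAddCommGroup E] [InnerProductSpace ℝ E] {u v w x y z : ℝ × E}

variable (E) in
/-- The Minkowski bilinear form on `ℝ × E`, where the factor `ℝ` is time and the real inner
product space `E`, of any dimension, is space. -/
noncomputable def minkowskiForm : BilinForm ℝ (ℝ × E) :=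
  (innerₗ E).compl₁₂ (.snd ℝ ℝ E) (.snd ℝ ℝ E) -
    (LinearMap.mul ℝ ℝ).compl₁₂ (.fst ℝ ℝ E) (.fst ℝ ℝ E)

variable (E) in
/-- The hyperboloid model, in `ℝ × E`, of the hyperbolic space of dimension `dim E`. -/
def hyperboloid : Set (ℝ × E) := {x | minkowskiForm E x x = -1 ∧ 0 < x.1}

lemma minkowskiForm_apply (x y : ℝ × E) : minkowskiForm E x y = ⟪x.2, y.2⟫ - x.1 * y.1 := rfl

lemma isSymm_minkowskiForm : (minkowskiForm E).IsSymm :=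
  ⟨fun x y ↦ by simp only [minkowskiForm_apply, real_inner_comm, mul_comm]⟩

lemma minkowskiForm_self_nonpos_iff : minkowskiForm E x x ≤ 0 ↔ ‖x.2‖ ≤ |x.1| := by
  rw [minkowskiForm_apply, real_inner_self_eq_norm_sq, sub_nonpos, ← sq, sq_le_sq, abs_norm]

lemma minkowskiForm_nonpos_of_norm_le (hx : ‖x.2‖ ≤ x.1) (hy : ‖y.2‖ ≤ y.1) :
    minkowskiForm E x y ≤ 0 := by
  rw [minkowskiForm_apply, sub_nonpos]
  calc ⟪x.2, y.2⟫ ≤ ‖x.2‖ * ‖y.2‖ := real_inner_le_norm x.2 y.2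
    _ ≤ x.1 * y.1 := by gcongr; exact (norm_nonneg _).trans hx

lemma norm_snd_le_fst_of_mem_hyperboloid (hx : x ∈ hyperboloid E) : ‖x.2‖ ≤ x.1 := by
  obtain ⟨hxx, hx0⟩ := hx
  rw [← abs_of_pos hx0, ← minkowskiForm_self_nonpos_iff, hxx]
  norm_num

lemma minkowskiForm_self_pos_of_separates (hx : ‖x.2‖ ≤ x.1) (hy : ‖y.2‖ ≤ y.1)
    (hwx : 0 < minkowskiForm E w x) (hwy : minkowskiForm E w y < 0) :
    0 < minkowskiForm E w w := by
  by_contra! hw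
  rw [minkowskiForm_self_nonpos_iff] at hw
  rcases le_total 0 w.1 with hw0 | hw0
  · rw [abs_of_nonneg hw0] at hw
    exact hwx.not_ge (minkowskiForm_nonpos_of_norm_le hw hx)
  · have hneg : ‖(-w).2‖ ≤ (-w).1 := by simpa [abs_of_nonpos hw0] using hw
    have := minkowskiForm_nonpos_of_norm_le hneg hy
    rw [map_neg, LinearMap.neg_apply] at this
    linarith

lemma exists_smul_mem_hyperboloid (hz : minkowskiForm E z z < 0) :
    ∃ t : ℝ, t • z ∈ hyperboloid E := by
  have hz0 : z.1 ≠ 0 := by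
    intro h
    rw [minkowskiForm_apply, h, mul_zero, sub_zero] at hz
    exact hz.not_ge real_inner_self_nonneg
  have hpos : 0 < -minkowskiForm E z z := neg_pos.mpr hz
  obtain ⟨s, hs, hsz⟩ : ∃ s : ℝ, s ^ 2 = 1 ∧ 0 < s * z.1 := by
    rcases hz0.lt_or_gt with h | h
    · exact ⟨-1, by norm_num, by linarith⟩
    · exact ⟨1, by norm_num, by linarith⟩
  refine ⟨s / √(-minkowskiForm E z z), ?_, ?_⟩
  · simp only [map_smul, LinearMap.smul_apply, smul_eq_mul]
    rw [← mul_assoc, ← sq, div_pow, hs, Real.sq_sqrt hpos.le, one_div_mul_eq_div,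
      div_neg, div_self hz.ne]
  · rw [Prod.smul_fst, smul_eq_mul, div_mul_eq_mul_div]
    positivity

lemma one_le_abs_minkowskiForm_of_disjoint (hu : minkowskiForm E u u = 1)
    (hv : minkowskiForm E v v = 1)
    (hdisj : ¬ ∃ z ∈ hyperboloid E, minkowskiForm E u z = 0 ∧ minkowskiForm E v z = 0) :
    1 ≤ |minkowskiForm E u v| := by
  by_contra! huv
  obtain ⟨z, huz, hvz, hz⟩ := exists_orthogonal_to_pair_apply_self_le (v := v)
    isSymm_minkowskiForm (hu ▸ one_pos) (by simpa [hu, hv] using huv) ((1, 0) : ℝ × E)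
  have hz_neg : minkowskiForm E z z < 0 := hz.trans_lt (by simp [minkowskiForm_apply])
  obtain ⟨t, ht⟩ := exists_smul_mem_hyperboloid hz_neg
  exact hdisj ⟨t • z, ht, by simp [huz], by simp [hvz]⟩

lemma neg_one_lt_minkowskiForm_of_separates (hu : minkowskiForm E u u = 1)
    (hv : minkowskiForm E v v = 1) (hx : ‖x.2‖ ≤ x.1) (hy : ‖y.2‖ ≤ y.1)
    (hux : 0 < minkowskiForm E u x) (huy : minkowskiForm E u y < 0)
    (hvx : 0 < minkowskiForm E v x) (hvy : minkowskiForm E v y < 0) :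
    -1 < minkowskiForm E u v := by
  have hpos : 0 < minkowskiForm E (u + v) (u + v) :=
    minkowskiForm_self_pos_of_separates hx hy
      (by rw [map_add]; exact add_pos hux hvx) (by rw [map_add]; exact add_neg huy hvy)
  simp only [map_add, LinearMap.add_apply, hu, hv, isSymm_minkowskiForm.eq v u] at hpos
  linarith

theorem disjoint_separating_duals_have_product_ge_one_general (hu : minkowskiForm E u u = 1)
    (hv : minkowskiForm E v v = 1) (hx : x ∈ hyperboloid E) (hy : y ∈ hyperboloid E)
    (hux : 0 < minkowskiForm E u x) (huy : minkowskiForm E u y < 0)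
    (hvx : 0 < minkowskiForm E v x) (hvy : minkowskiForm E v y < 0)
    (hdisj : ¬ ∃ z ∈ hyperboloid E, minkowskiForm E u z = 0 ∧ minkowskiForm E v z = 0) :
    1 ≤ minkowskiForm E u v := by
  have hlt := neg_one_lt_minkowskiForm_of_separates hu hv (norm_snd_le_fst_of_mem_hyperboloid hx)
    (norm_snd_le_fst_of_mem_hyperboloid hy) hux huy hvx hvy
  rcases le_abs.mp (one_le_abs_minkowskiForm_of_disjoint hu hv hdisj) with h | h
  · exact h
  · linarith

end Minkowski

/-- The identification of `ℝ³` with `ℝ × E`, for `E` the Euclidean plane, that takes the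
coordinate `x 0` as time. -/
def timeSpaceEquiv : (Fin 3 → ℝ) ≃ ℝ × EuclideanSpace ℝ (Fin 2) :=
  (Fin.consEquiv fun _ ↦ ℝ).symm.trans ((Equiv.refl ℝ).prodCongr (WithLp.equiv 2 _).symm)

lemma minkowskiForm_timeSpaceEquiv (x y : Fin 3 → ℝ) :
    minkowskiForm _ (timeSpaceEquiv x) (timeSpaceEquiv y) = B x y := by
  rw [minkowskiForm_apply, PiLp.inner_apply, Fin.sum_univ_two]
  change y 1 * x 1 + y 2 * x 2 - x 0 * y 0 = -(x 0 * y 0) + x 1 * y 1 + x 2 * y 2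
  ring

lemma timeSpaceEquiv_mem_hyperboloid {x : Fin 3 → ℝ} :
    timeSpaceEquiv x ∈ hyperboloid _ ↔ x ∈ H2 := by
  rw [hyperboloid, Set.mem_ofPred_eq, minkowskiForm_timeSpaceEquiv]
  rfl

theorem disjoint_separating_duals_have_product_ge_one (u v x y : Fin 3 → ℝ)
    (hu : B u u = 1) (hv : B v v = 1)
    (hx : x ∈ H2) (hy : y ∈ H2)
    (hux : 0 < B u x) (huy : B u y < 0)
    (hvx : 0 < B v x) (hvy : B v y < 0)
    (hdisj : ¬ ∃ z ∈ H2, B u z = 0 ∧ B v z = 0) :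
    1 ≤ B u v := by
  simp only [← minkowskiForm_timeSpaceEquiv, ← timeSpaceEquiv_mem_hyperboloid] at *
  exact disjoint_separating_duals_have_product_ge_one_general hu hv hx hy hux huy hvx hvy
    (by rwa [timeSpaceEquiv.surjective.exists])
end

section
/- Let l > 0, m > 0, 0 < θ < π, γ = M(l), δ = R_θ·M(m)·R_{-θ}, α = δ⁻¹γ⁻¹δγ, and v = (sinh l·sinh m + (cosh l - 1)(cosh m - 1)·cos θ, -sinh m·(cosh l - 1) - sinh l·(cosh m - 1)·cos θ, -sin θ·sinh l·(cosh m - 1)). Then {x ∈ ℝ³ : α·x = x} = {x ∈ ℝ³ : (δγ)·x = (γδ)·x} = ℝ·v; in particular the fixed space of α is one-dimensional and spanned by v. -/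
/-- Hyperbolic translation of length `l` along the standard axis. -/
noncomputable def Mmat (l : ℝ) : Matrix (Fin 3) (Fin 3) ℝ :=
  !![Real.cosh l, Real.sinh l, 0; Real.sinh l, Real.cosh l, 0; 0, 0, 1]

/-- Rotation by angle `θ`. -/
noncomputable def Rmat (θ : ℝ) : Matrix (Fin 3) (Fin 3) ℝ :=
  !![1, 0, 0; 0, Real.cos θ, -Real.sin θ; 0, Real.sin θ, Real.cos θ]

/-- Generator of the fixed line of `δγ`. -/
noncomputable def wvec (l m θ : ℝ) : Fin 3 → ℝ :=
  ![Real.sin θ * (Real.cosh m - 1) * Real.sinh l,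
    -(Real.sin θ * (Real.cosh m - 1) * (Real.cosh l + 1)),
    Real.sinh l * Real.sinh m + Real.cos θ * (Real.cosh l + 1) * (Real.cosh m - 1)]

/-- Generator of the fixed line of the commutator `α = δ⁻¹γ⁻¹δγ`. -/
noncomputable def vvec (l m θ : ℝ) : Fin 3 → ℝ :=
  ![Real.sinh l * Real.sinh m + (Real.cosh l - 1) * (Real.cosh m - 1) * Real.cos θ,
    -(Real.sinh m * (Real.cosh l - 1)) - Real.sinh l * (Real.cosh m - 1) * Real.cos θ,
    -(Real.sin θ * Real.sinh l * (Real.cosh m - 1))]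

/-!
A vector is fixed by `δ⁻¹γ⁻¹δγ` exactly when it lies in the kernel of `δγ - γδ`. The boost `γ` and
its rotated copy `δ` are symmetric matrices, so `δγ - γδ` is skew-symmetric and acts on `ℝ³` as the
cross product with some vector. That vector is `sin θ • v`, and the kernel of the cross product with
a nonzero vector is the line it spans.
-/

section

open Matrix

theorem inv_mul_inv_mul_mul_mulVec_eq_self_iff {n R : Type*} [Fintype n] [DecidableEq n]
    [CommRing R] {D G : Matrix n n R} (hD : IsUnit D.det) (hG : IsUnit G.det) (x : n → R) :
    (D⁻¹ * G⁻¹ * D * G) *ᵥ x = x ↔ (D * G) *ᵥ x = (G * D) *ᵥ x := by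
  have hGD : IsUnit (G * D).det := by simpa only [det_mul] using hG.mul hD
  rw [mul_assoc, ← Matrix.mul_inv_rev, ← mulVec_mulVec]
  constructor <;> intro h
  · nth_rw 2 [← h]
    rw [mulVec_mulVec, mul_nonsing_inv _ hGD, one_mulVec]
  · rw [h, mulVec_mulVec, nonsing_inv_mul _ hGD, one_mulVec]

theorem transpose_lie_of_isSymm {n R : Type*} [Fintype n] [NonUnitalCommRing R]
    {A B : Matrix n n R} (hA : A.IsSymm) (hB : B.IsSymm) : ⁅A, B⁆ᵀ = -⁅A, B⁆ := by
  rw [Ring.lie_def, transpose_sub, transpose_mul, transpose_mul, hA.eq, hB.eq, neg_sub]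

theorem mulVec_eq_cross_of_transpose_eq_neg {R : Type*} [CommRing R] [IsAddTorsionFree R]
    {A : Matrix (Fin 3) (Fin 3) R} (hA : Aᵀ = -A) (x : Fin 3 → R) :
    A *ᵥ x = ![A 2 1, A 0 2, A 1 0] ⨯₃ x := by
  have swap (i j : Fin 3) : A i j = -A j i := congr_fun₂ hA j i
  have diag (i : Fin 3) : A i i = 0 := self_eq_neg.mp (swap i i)
  ext i
  fin_cases i <;>
    simp [mulVec, dotProduct, Fin.sum_univ_three, cross_apply, diag, swap 0 1, swap 1 2, swap 2 0]
      <;> ring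

theorem cross_eq_zero_iff_exists_eq_smul {K : Type*} [Field K] {v : Fin 3 → K} (hv : v ≠ 0)
    (x : Fin 3 → K) : v ⨯₃ x = 0 ↔ ∃ t : K, x = t • v := by
  rw [← not_iff_not, ← ne_eq, crossProduct_ne_zero_iff_linearIndependent,
    LinearIndependent.pair_iff' hv]
  simp only [not_exists, ne_eq, eq_comm]

theorem det_Mmat (l : ℝ) : (Mmat l).det = 1 := by
  simp [Mmat, det_fin_three, ← sq]

theorem isSymm_Mmat (l : ℝ) : (Mmat l).IsSymm := by
  ext i j
  fin_cases i <;> fin_cases j <;> rfl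

theorem det_Rmat (θ : ℝ) : (Rmat θ).det = 1 := by
  simp [Rmat, det_fin_three, ← sq]

theorem Rmat_neg (θ : ℝ) : Rmat (-θ) = (Rmat θ)ᵀ := by
  ext i j
  fin_cases i <;> fin_cases j <;> simp [Rmat]

theorem det_Rmat_mul_Mmat_mul_Rmat_neg (m θ : ℝ) : (Rmat θ * Mmat m * Rmat (-θ)).det = 1 := by
  simp only [det_mul, det_Rmat, det_Mmat, mul_one]

theorem isSymm_Rmat_mul_Mmat_mul_Rmat_neg (m θ : ℝ) : (Rmat θ * Mmat m * Rmat (-θ)).IsSymm := by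
  rw [Rmat_neg, IsSymm, transpose_mul, transpose_mul, transpose_transpose, (isSymm_Mmat m).eq,
    mul_assoc]

theorem Rmat_mul_Mmat_mul_Rmat_neg (m θ : ℝ) :
    Rmat θ * Mmat m * Rmat (-θ) =
      !![Real.cosh m, Real.sinh m * Real.cos θ, Real.sinh m * Real.sin θ;
        Real.sinh m * Real.cos θ, 1 + (Real.cosh m - 1) * Real.cos θ ^ 2,
          (Real.cosh m - 1) * Real.cos θ * Real.sin θ;
        Real.sinh m * Real.sin θ, (Real.cosh m - 1) * Real.cos θ * Real.sin θ,
          1 + (Real.cosh m - 1) * Real.sin θ ^ 2] := by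
  ext i j
  fin_cases i <;> fin_cases j <;> simp [Rmat, Mmat, mul_apply, Fin.sum_univ_three] <;>
    linarith [Real.sin_sq_add_cos_sq θ]

theorem lie_mulVec_eq_smul_vvec_cross (l m θ : ℝ) (x : Fin 3 → ℝ) :
    ⁅Rmat θ * Mmat m * Rmat (-θ), Mmat l⁆ *ᵥ x = Real.sin θ • (vvec l m θ ⨯₃ x) := by
  have hskew := transpose_lie_of_isSymm (isSymm_Rmat_mul_Mmat_mul_Rmat_neg m θ) (isSymm_Mmat l)
  rw [mulVec_eq_cross_of_transpose_eq_neg hskew, ← LinearMap.smul_apply, ← map_smul]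
  congr 2
  rw [Ring.lie_def, Rmat_mul_Mmat_mul_Rmat_neg]
  ext i
  fin_cases i <;> simp [Mmat, vvec, Real.cos_sq'] <;> ring

theorem vvec_ne_zero {l m θ : ℝ} (hl : l ≠ 0) (hm : m ≠ 0) (hθ : Real.sin θ ≠ 0) :
    vvec l m θ ≠ 0 := by
  have hsinh : Real.sinh l ≠ 0 := Real.sinh_ne_zero.mpr hl
  have hcosh : Real.cosh m - 1 ≠ 0 := sub_ne_zero.mpr (Real.one_lt_cosh.mpr hm).ne'
  have h2 : vvec l m θ 2 ≠ 0 := neg_ne_zero.mpr (mul_ne_zero (mul_ne_zero hθ hsinh) hcosh)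
  exact fun h => h2 (congr_fun h 2)

end

theorem fixed_space_of_commutator_general (l m θ : ℝ)
    (hl : l ≠ 0) (hm : m ≠ 0) (hθ : Real.sin θ ≠ 0) :
    {x : Fin 3 → ℝ | ((Rmat θ * Mmat m * Rmat (-θ))⁻¹ * (Mmat l)⁻¹ *
        (Rmat θ * Mmat m * Rmat (-θ)) * Mmat l).mulVec x = x} =
      {x : Fin 3 → ℝ | ((Rmat θ * Mmat m * Rmat (-θ)) * Mmat l).mulVec x =
        (Mmat l * (Rmat θ * Mmat m * Rmat (-θ))).mulVec x} ∧
    {x : Fin 3 → ℝ | ((Rmat θ * Mmat m * Rmat (-θ)) * Mmat l).mulVec x =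
        (Mmat l * (Rmat θ * Mmat m * Rmat (-θ))).mulVec x} =
      {x : Fin 3 → ℝ | ∃ t : ℝ, x = t • vvec l m θ} := by
  have hD : IsUnit (Rmat θ * Mmat m * Rmat (-θ)).det :=
    (det_Rmat_mul_Mmat_mul_Rmat_neg m θ).symm ▸ isUnit_one
  have hG : IsUnit (Mmat l).det := (det_Mmat l).symm ▸ isUnit_one
  refine ⟨Set.ext (inv_mul_inv_mul_mul_mulVec_eq_self_iff hD hG), Set.ext fun x => ?_⟩
  rw [Set.mem_ofPred_eq, Set.mem_ofPred_eq, ← sub_eq_zero, ← Matrix.sub_mulVec, ← Ring.lie_def,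
    lie_mulVec_eq_smul_vvec_cross, smul_eq_zero_iff_right hθ,
    cross_eq_zero_iff_exists_eq_smul (vvec_ne_zero hl hm hθ)]

theorem fixed_space_of_commutator (l m θ : ℝ)
    (hl : 0 < l) (hm : 0 < m) (hθ : 0 < θ) (hθ' : θ < Real.pi) :
    {x : Fin 3 → ℝ | ((Rmat θ * Mmat m * Rmat (-θ))⁻¹ * (Mmat l)⁻¹ *
        (Rmat θ * Mmat m * Rmat (-θ)) * Mmat l).mulVec x = x} =
      {x : Fin 3 → ℝ | ((Rmat θ * Mmat m * Rmat (-θ)) * Mmat l).mulVec x =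
        (Mmat l * (Rmat θ * Mmat m * Rmat (-θ))).mulVec x} ∧
    {x : Fin 3 → ℝ | ((Rmat θ * Mmat m * Rmat (-θ)) * Mmat l).mulVec x =
        (Mmat l * (Rmat θ * Mmat m * Rmat (-θ))).mulVec x} =
      {x : Fin 3 → ℝ | ∃ t : ℝ, x = t • vvec l m θ} :=
  fixed_space_of_commutator_general l m θ hl.ne' hm.ne' (Real.sin_pos_of_pos_of_lt_pi hθ hθ').ne'
end
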